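/- Let ρ ∈ (−1, 1), σ_X > 0, σ_Y > 0 and n ≥ 1. For i = 1, …, n let Xᵢ and Vᵢ be independent standard normal random variables (all 2n variables mutually independent), set Yᵢ = ρXᵢ + √(1 − ρ²)Vᵢ, and let Z̄ = (1/n) Σ_{i=1}^n (σ_X Xᵢ)(σ_Y Yᵢ). Then the law of Z̄ is absolutely continuous with respect to Lebesgue measure, with density p(x) = (n^{(n+1)/2} 2^{(1−n)/2} |x|^{(n−1)/2}) / ((σ_X σ_Y)^{(n+1)/2} √(π(1 − ρ²)) Γ(n/2)) · exp(ρ n x/(σ_X σ_Y (1 − ρ²))) · K_{(n−1)/2}(n|x|/(σ_X σ_Y (1 − ρ²))) for x ≠ 0, where K_ν(y) = ∫₀^∞ e^{−y cosh t} cosh(νt) dt. -/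

import Mathlib

open MeasureTheory ProbabilityTheory

/-- The modified Bessel function of the second kind,
`K_ν(y) = ∫₀^∞ e^{−y cosh t} cosh(νt) dt`. -/
noncomputable def besselK (ν y : ℝ) : ℝ :=
  ∫ t in Set.Ioi (0 : ℝ), Real.exp (-(y * Real.cosh t)) * Real.cosh (ν * t)

/-!
Stack the variables into two independent standard Gaussian vectors `x` and `v` of `ℝⁿ`. With
`κ = σ_X σ_Y / n`, the sample mean is `κ ρ ‖x‖² + κ √(1 - ρ²) ⟪x, v⟫`, so conditionally on `x` it is
normal with mean `κ ρ s` and variance `κ² (1 - ρ²) s`, where `s = ‖x‖²`. The moment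
generating function identifies the law of `s` as a gamma law, so the sample mean has a
variance-gamma law. Integrating the mixing variable out of its density leaves
`∫₀^∞ s^(ν - 1) exp (-(β / 2) (s + y² / s)) ds`, which the substitution `s = y eᵗ` turns into
`2 y^ν K_ν(β y)`.
-/

open Filter Topology
open scoped ENNReal NNReal

theorem one_add_sq_div_two_le_cosh (t : ℝ) : 1 + t ^ 2 / 2 ≤ Real.cosh t := by
  have hpartial := sum_le_hasSum (Finset.range 2)
    (fun i _ ↦ div_nonneg ((even_two_mul i).pow_nonneg t) (Nat.cast_nonneg _)) (Real.hasSum_cosh t)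
  simpa [Finset.sum_range_succ] using hpartial

theorem integrable_exp_neg_mul_cosh_mul_exp (ν : ℝ) {y : ℝ} (hy : 0 < y) :
    Integrable fun t : ℝ ↦ Real.exp (-(y * Real.cosh t)) * Real.exp (ν * t) := by
  refine ((integrable_exp_neg_mul_sq (show 0 < y / 4 by positivity)).const_mul
    (Real.exp (ν ^ 2 / y))).mono' (by fun_prop) (.of_forall fun t ↦ ?_)
  rw [Real.norm_of_nonneg (by positivity), ← Real.exp_add, ← Real.exp_add, Real.exp_le_exp]
  have hsq : ν ^ 2 / y + y / 4 * t ^ 2 - ν * t = (ν - y * t / 2) ^ 2 / y := by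
    field_simp
    ring
  have hnonneg : 0 ≤ (ν - y * t / 2) ^ 2 / y := by positivity
  have hcosh := mul_le_mul_of_nonneg_left (one_add_sq_div_two_le_cosh t) hy.le
  linarith

theorem integral_exp_neg_mul_cosh_mul_exp (ν : ℝ) {y : ℝ} (hy : 0 < y) :
    ∫ t : ℝ, Real.exp (-(y * Real.cosh t)) * Real.exp (ν * t) = 2 * besselK ν y := by
  have hpos := integrable_exp_neg_mul_cosh_mul_exp ν hy
  have hneg := integrable_exp_neg_mul_cosh_mul_exp (-ν) hy
  have hreflect : ∫ t in Set.Iic (0 : ℝ), Real.exp (-(y * Real.cosh t)) * Real.exp (ν * t) =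
      ∫ t in Set.Ioi (0 : ℝ), Real.exp (-(y * Real.cosh t)) * Real.exp (-ν * t) := by
    simpa using integral_comp_neg_Iic (0 : ℝ)
      fun t ↦ Real.exp (-(y * Real.cosh t)) * Real.exp (-ν * t)
  rw [← intervalIntegral.integral_Iic_add_Ioi hpos.integrableOn hpos.integrableOn, hreflect,
    ← integral_add hneg.integrableOn hpos.integrableOn, besselK, ← integral_const_mul]
  congr with t
  rw [Real.cosh_eq (ν * t), neg_mul]
  ring

theorem range_mul_exp {y : ℝ} (hy : 0 < y) :
    Set.range (fun t : ℝ ↦ y * Real.exp t) = Set.Ioi 0 := by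
  rw [Set.range_comp' (y * ·) Real.exp, Real.range_exp, Set.image_mul_left_Ioi hy, mul_zero]

theorem lintegral_Ioi_eq_lintegral_comp_mul_exp {y : ℝ} (hy : 0 < y) (f : ℝ → ℝ≥0∞) :
    ∫⁻ s in Set.Ioi 0, f s = ∫⁻ t, ENNReal.ofReal (y * Real.exp t) * f (y * Real.exp t) := by
  have hinj : Function.Injective fun t ↦ y * Real.exp t :=
    (mul_right_injective₀ hy.ne').comp Real.exp_injective
  rw [← range_mul_exp hy, ← Set.image_univ, lintegral_image_eq_lintegral_abs_deriv_mul .univ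
      (fun t _ ↦ ((Real.hasDerivAt_exp t).const_mul y).hasDerivWithinAt) hinj.injOn,
    Measure.restrict_univ]
  simp_rw [abs_of_pos (mul_pos hy (Real.exp_pos _))]

theorem lintegral_rpow_mul_exp_eq_besselK (ν : ℝ) {β y : ℝ} (hβ : 0 < β) (hy : 0 < y) :
    ∫⁻ s in Set.Ioi (0 : ℝ), ENNReal.ofReal
        (s ^ (ν - 1) * Real.exp (-(β / 2 * (s + y ^ 2 / s)))) =
      ENNReal.ofReal (2 * y ^ ν * besselK ν (β * y)) := by
  have hsubst (t : ℝ) : y * Real.exp t * ((y * Real.exp t) ^ (ν - 1) *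
      Real.exp (-(β / 2 * (y * Real.exp t + y ^ 2 / (y * Real.exp t))))) =
      y ^ ν * (Real.exp (-(β * y * Real.cosh t)) * Real.exp (ν * t)) := by
    have hs : y * Real.exp t ≠ 0 := by positivity
    have hcosh : β / 2 * (y * Real.exp t + y ^ 2 / (y * Real.exp t)) =
        β * y * Real.cosh t := by
      rw [Real.cosh_eq, Real.exp_neg]
      field_simp
    rw [hcosh, Real.rpow_sub_one hs, Real.mul_rpow hy.le (Real.exp_pos t).le, ← Real.exp_mul,
      mul_comm t]
    field_simp
  rw [lintegral_Ioi_eq_lintegral_comp_mul_exp hy]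
  simp_rw [← ENNReal.ofReal_mul (mul_pos hy (Real.exp_pos _)).le, hsubst]
  rw [← ofReal_integral_eq_lintegral_ofReal
    ((integrable_exp_neg_mul_cosh_mul_exp ν (mul_pos hβ hy)).const_mul _)
    (.of_forall fun t ↦ by positivity), integral_const_mul,
    integral_exp_neg_mul_cosh_mul_exp ν (mul_pos hβ hy)]
  ring_nf

theorem eqOn_complexMGF_of_mgf_eventuallyEq {Ω Ω' : Type*} [MeasurableSpace Ω]
    [MeasurableSpace Ω'] {μ : Measure Ω} {μ' : Measure Ω'} {X : Ω → ℝ} {Y : Ω' → ℝ} {t : ℝ}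
    (hX : t ∈ interior (integrableExpSet X μ)) (hY : t ∈ interior (integrableExpSet Y μ'))
    (h : mgf X μ =ᶠ[𝓝 t] mgf Y μ') :
    Set.EqOn (complexMGF X μ) (complexMGF Y μ')
      {z | z.re ∈ interior (integrableExpSet X μ) ∩ interior (integrableExpSet Y μ')} := by
  refine AnalyticOnNhd.eqOn_of_preconnected_of_frequently_eq
    (analyticOnNhd_complexMGF.mono fun z hz ↦ hz.1)
    (analyticOnNhd_complexMGF.mono fun z hz ↦ hz.2)
    ((convex_integrableExpSet.interior.inter convex_integrableExpSet.interior).linear_preimage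
      Complex.reLm).isPreconnected (z₀ := (t : ℂ)) (by simp [hX, hY]) ?_
  have hofReal : Tendsto ((↑) : ℝ → ℂ) (𝓝[≠] t) (𝓝[≠] (t : ℂ)) :=
    Complex.continuous_ofReal.continuousWithinAt.tendsto_nhdsWithin fun s hs ↦ by simpa using hs
  have hreal : ∃ᶠ s : ℝ in 𝓝[≠] t, complexMGF X μ s = complexMGF Y μ' s := by
    refine (h.filter_mono nhdsWithin_le_nhds).frequently.mono fun s hs ↦ ?_
    rw [complexMGF_ofReal, complexMGF_ofReal, hs]
  exact hofReal.frequently hreal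

theorem map_eq_map_of_mgf_eventuallyEq {Ω Ω' : Type*} [MeasurableSpace Ω]
    [MeasurableSpace Ω'] {μ : Measure Ω} {μ' : Measure Ω'} [IsFiniteMeasure μ] [NeZero μ]
    [IsFiniteMeasure μ'] {X : Ω → ℝ} {Y : Ω' → ℝ} (hXm : AEMeasurable X μ)
    (hYm : AEMeasurable Y μ') (hX : 0 ∈ interior (integrableExpSet X μ))
    (h : mgf X μ =ᶠ[𝓝 0] mgf Y μ') :
    μ.map X = μ'.map Y := by
  have hY : 0 ∈ interior (integrableExpSet Y μ') := by
    rw [mem_interior_iff_mem_nhds]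
    filter_upwards [h, mem_interior_iff_mem_nhds.1 hX] with t ht htX
    by_contra htY
    exact (mgf_pos' (NeZero.ne μ) htX).ne' (ht.trans (mgf_undef htY))
  -- Agreement on a real neighbourhood of `0` spreads to the imaginary axis, where `complexMGF` is
  -- the characteristic function.
  have heq := eqOn_complexMGF_of_mgf_eventuallyEq hX hY h
  refine Measure.ext_of_charFun (funext fun t ↦ ?_)
  rw [← complexMGF_mul_I hXm, ← complexMGF_mul_I hYm]
  exact heq (by simp [hX, hY])

theorem measurable_gammaPDF (a r : ℝ) : Measurable (gammaPDF a r) :=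
  (measurable_gammaPDFReal a r).ennreal_ofReal

theorem ae_pos_gammaMeasure (a r : ℝ) : ∀ᵐ s ∂gammaMeasure a r, 0 < s := by
  rw [gammaMeasure, ae_withDensity_iff (measurable_gammaPDF a r)]
  filter_upwards [Measure.ae_ne volume (0 : ℝ)] with s hs hpdf
  exact hs.symm.lt_of_le (not_lt.1 fun hneg ↦ hpdf (gammaPDF_of_neg hneg))

theorem lintegral_gammaMeasure (a r : ℝ) (f : ℝ → ℝ≥0∞) :
    ∫⁻ s, f s ∂gammaMeasure a r = ∫⁻ s in Set.Ioi 0,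
      ENNReal.ofReal (r ^ a / Real.Gamma a * s ^ (a - 1) * Real.exp (-(r * s))) * f s := by
  rw [← Measure.restrict_eq_self_of_ae_mem (s := Set.Ioi 0) (ae_pos_gammaMeasure a r),
    gammaMeasure, setLIntegral_withDensity_eq_setLIntegral_mul_non_measurable _
      (measurable_gammaPDF a r) _ measurableSet_Ioi (.of_forall fun s ↦ ENNReal.ofReal_lt_top)]
  refine setLIntegral_congr_fun measurableSet_Ioi fun s (hs : 0 < s) ↦ ?_
  rw [Pi.mul_apply, gammaPDF_of_nonneg hs.le]

theorem mgf_id_gammaMeasure {a r t : ℝ} (ha : 0 < a) (hr : 0 < r) (ht : t < r) :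
    mgf id (gammaMeasure a r) t = (r / (r - t)) ^ a := by
  have hrt : 0 < r - t := sub_pos.2 ht
  have hpdf (s : ℝ) (hs : 0 < s) : (gammaPDF a r s).toReal • Real.exp (t * s) =
      r ^ a / Real.Gamma a * (s ^ (a - 1) * Real.exp (-((r - t) * s))) := by
    rw [gammaPDF, ENNReal.toReal_ofReal (gammaPDFReal_nonneg ha hr s), gammaPDFReal,
      if_pos hs.le, smul_eq_mul, mul_assoc, mul_assoc, ← Real.exp_add]
    ring_nf
  have hneg (s : ℝ) (hs : s ∉ Set.Ici 0) : (gammaPDF a r s).toReal • Real.exp (t * s) = 0 := by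
    rw [gammaPDF_of_neg (not_le.1 hs), ENNReal.toReal_zero, zero_smul]
  simp only [mgf, id]
  rw [gammaMeasure, integral_withDensity_eq_integral_toReal_smul
      (measurable_gammaPDF a r) (.of_forall fun s ↦ ENNReal.ofReal_lt_top),
    ← setIntegral_eq_integral_of_forall_compl_eq_zero hneg, integral_Ici_eq_integral_Ioi,
    setIntegral_congr_fun measurableSet_Ioi hpdf, integral_const_mul,
    Real.integral_rpow_mul_exp_neg_mul_Ioi ha hrt, Real.div_rpow hr.le hrt.le,
    Real.div_rpow zero_le_one hrt.le, Real.one_rpow]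
  have := (Real.Gamma_pos_of_pos ha).ne'
  field_simp

theorem mgf_sq_gaussianReal (v : ℝ≥0) (t : ℝ) :
    mgf (fun x ↦ x ^ 2) (gaussianReal 0 v) t = (√(1 - 2 * v * t))⁻¹ := by
  rcases eq_or_ne v 0 with rfl | hv
  · simp [mgf]
  have hexp (x : ℝ) : gaussianPDFReal 0 v x • Real.exp (t * x ^ 2) =
      (√(2 * Real.pi * v))⁻¹ * Real.exp (-((1 - 2 * v * t) / (2 * v)) * x ^ 2) := by
    rw [gaussianPDFReal, smul_eq_mul, mul_assoc, ← Real.exp_add]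
    congr 2
    field_simp
    ring
  rw [mgf, integral_gaussianReal_eq_integral_smul hv]
  simp_rw [hexp]
  rw [integral_const_mul, integral_gaussian, ← Real.sqrt_inv, ← Real.sqrt_mul (by positivity),
    ← Real.sqrt_inv]
  congr 1
  field_simp

theorem measurable_withDensity_of_uncurry {α β : Type*} [MeasurableSpace α]
    [MeasurableSpace β] (ν : Measure β) [SFinite ν] {f : α → β → ℝ≥0∞}
    (hf : Measurable (Function.uncurry f)) : Measurable fun a ↦ ν.withDensity (f a) := by
  refine Measure.measurable_of_measurable_coe _ fun s hs ↦ ?_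
  simp_rw [withDensity_apply _ hs]
  exact hf.lintegral_prod_right

theorem bind_withDensity {α β : Type*} [MeasurableSpace α] [MeasurableSpace β]
    (μ : Measure α) [SFinite μ] (ν : Measure β) [SFinite ν] {f : α → β → ℝ≥0∞}
    (hf : Measurable (Function.uncurry f)) :
    μ.bind (fun a ↦ ν.withDensity (f a)) = ν.withDensity fun b ↦ ∫⁻ a, f a b ∂μ := by
  ext s hs
  rw [Measure.bind_apply hs (measurable_withDensity_of_uncurry ν hf).aemeasurable,
    withDensity_apply _ hs, lintegral_lintegral_swap (f := fun b a ↦ f a b)]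
  · simp_rw [withDensity_apply _ hs]
  · exact (hf.comp measurable_swap).aemeasurable

/-- The variance-gamma law: the normal variance-mean mixture `N(θ s, v s)` with `s` distributed
according to the gamma law of shape `a` and rate `r`. -/
noncomputable def varianceGamma (a r θ : ℝ) (v : ℝ≥0) : Measure ℝ :=
  (gammaMeasure a r).bind fun s ↦ gaussianReal (θ * s) (v * s.toNNReal)

/-- The density of the variance-gamma law `varianceGamma a r θ v`; only its values at `x ≠ 0` are
meaningful. -/
noncomputable def varianceGammaPDFReal (a r θ : ℝ) (v : ℝ≥0) (x : ℝ) : ℝ :=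
  2 * r ^ a / (Real.Gamma a * √(2 * Real.pi * v)) * Real.exp (θ * x / v) *
    (|x| / √(θ ^ 2 + 2 * r * v)) ^ (a - 1 / 2) *
    besselK (a - 1 / 2) (|x| * √(θ ^ 2 + 2 * r * v) / v)

theorem gamma_mul_gaussianPDFReal {a r θ : ℝ} {v : ℝ≥0} (hr : 0 < r) (hv : v ≠ 0) {s : ℝ}
    (hs : 0 < s) (x : ℝ) :
    r ^ a / Real.Gamma a * s ^ (a - 1) * Real.exp (-(r * s)) *
        gaussianPDFReal (θ * s) (v * s.toNNReal) x =
      r ^ a / (Real.Gamma a * √(2 * Real.pi * v)) * Real.exp (θ * x / v) *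
        (s ^ (a - 1 / 2 - 1) * Real.exp (-((θ ^ 2 + 2 * r * v) / v / 2 *
          (s + (|x| / √(θ ^ 2 + 2 * r * v)) ^ 2 / s)))) := by
  have hexp : -(r * s) + -(x - θ * s) ^ 2 / (2 * (v * s)) = θ * x / v +
      -((θ ^ 2 + 2 * r * v) / v / 2 * (s + (|x| / √(θ ^ 2 + 2 * r * v)) ^ 2 / s)) := by
    rw [div_pow, sq_abs, Real.sq_sqrt (by positivity)]
    field_simp
    ring
  have hexp' := congrArg Real.exp hexp
  rw [Real.exp_add, Real.exp_add] at hexp'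
  have hrpow : s ^ (a - 1 / 2 - 1) = s ^ (a - 1) / √s := by
    rw [Real.sqrt_eq_rpow, ← Real.rpow_sub hs]
    ring_nf
  rw [gaussianPDFReal, NNReal.coe_mul, Real.coe_toNNReal s hs.le,
    ← mul_assoc (2 * Real.pi), Real.sqrt_mul (by positivity) s, hrpow]
  linear_combination (r ^ a / (Real.Gamma a * √(2 * Real.pi * v)) * (s ^ (a - 1) / √s)) * hexp'

theorem lintegral_gaussianPDF_gammaMeasure {a r θ : ℝ} {v : ℝ≥0} (ha : 0 < a) (hr : 0 < r)
    (hv : v ≠ 0) {x : ℝ} (hx : x ≠ 0) :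
    ∫⁻ s, gaussianPDF (θ * s) (v * s.toNNReal) x ∂gammaMeasure a r =
      ENNReal.ofReal (varianceGammaPDFReal a r θ v x) := by
  have hα : 0 < θ ^ 2 + 2 * r * v := by positivity
  have harg : (θ ^ 2 + 2 * r * v) / v * (|x| / √(θ ^ 2 + 2 * r * v)) =
      |x| * √(θ ^ 2 + 2 * r * v) / v := by
    nth_rw 1 [← Real.sq_sqrt hα.le]
    field_simp
  calc
    _ = ∫⁻ s in Set.Ioi 0,
        ENNReal.ofReal (r ^ a / (Real.Gamma a * √(2 * Real.pi * v)) * Real.exp (θ * x / v)) *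
        ENNReal.ofReal (s ^ (a - 1 / 2 - 1) * Real.exp (-((θ ^ 2 + 2 * r * v) / v / 2 *
          (s + (|x| / √(θ ^ 2 + 2 * r * v)) ^ 2 / s)))) := by
      rw [lintegral_gammaMeasure]
      refine setLIntegral_congr_fun measurableSet_Ioi fun s (hs : 0 < s) ↦ ?_
      rw [gaussianPDF, ← ENNReal.ofReal_mul (by positivity), ← ENNReal.ofReal_mul (by positivity),
        gamma_mul_gaussianPDFReal hr hv hs]
    _ = _ := by
      rw [lintegral_const_mul' _ _ ENNReal.ofReal_ne_top,
        lintegral_rpow_mul_exp_eq_besselK _ (by positivity) (by positivity), harg,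
        ← ENNReal.ofReal_mul (by positivity), varianceGammaPDFReal]
      ring_nf

theorem varianceGamma_eq_withDensity {a r θ : ℝ} {v : ℝ≥0} (ha : 0 < a) (hr : 0 < r)
    (hv : v ≠ 0) :
    varianceGamma a r θ v =
      volume.withDensity fun x ↦ ENNReal.ofReal (varianceGammaPDFReal a r θ v x) := by
  have := isProbabilityMeasure_gammaMeasure ha hr
  have hgauss : ∀ᵐ s ∂gammaMeasure a r, gaussianReal (θ * s) (v * s.toNNReal) =
      volume.withDensity (gaussianPDF (θ * s) (v * s.toNNReal)) := by
    filter_upwards [ae_pos_gammaMeasure a r] with s hs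
    exact gaussianReal_of_var_ne_zero _ (mul_ne_zero hv (Real.toNNReal_pos.2 hs).ne')
  have hm : Measurable (Function.uncurry fun s ↦ gaussianPDF (θ * s) (v * s.toNNReal)) :=
    measurable_uncurry_gaussianPDF.comp
      (f := fun p : ℝ × ℝ ↦ (θ * p.1, v * p.1.toNNReal, p.2)) (by fun_prop)
  rw [varianceGamma, Measure.bind_congr_right hgauss, bind_withDensity _ _ hm]
  refine withDensity_congr_ae ?_
  filter_upwards [Measure.ae_ne volume 0] with x hx
  exact lintegral_gaussianPDF_gammaMeasure ha hr hv hx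

theorem varianceGammaPDFReal_div_two_one_half {k s ρ : ℝ} (hk : 0 < k) (hs : 0 < s)
    (hρ : 0 < 1 - ρ ^ 2) (x : ℝ) :
    varianceGammaPDFReal (k / 2) (1 / 2) (s / k * ρ) (‖s / k * √(1 - ρ ^ 2)‖₊ ^ 2) x =
      k ^ ((k + 1) / 2) * 2 ^ ((1 - k) / 2) * |x| ^ ((k - 1) / 2) /
          (s ^ ((k + 1) / 2) * √(Real.pi * (1 - ρ ^ 2)) * Real.Gamma (k / 2)) *
        Real.exp (ρ * k * x / (s * (1 - ρ ^ 2))) *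
        besselK ((k - 1) / 2) (k * |x| / (s * (1 - ρ ^ 2))) := by
  have hv : ((‖s / k * √(1 - ρ ^ 2)‖₊ ^ 2 : ℝ≥0) : ℝ) = (s / k) ^ 2 * (1 - ρ ^ 2) := by
    rw [NNReal.coe_pow, coe_nnnorm, Real.norm_eq_abs, sq_abs, mul_pow, Real.sq_sqrt hρ.le]
  have hα : √((s / k * ρ) ^ 2 + 2 * (1 / 2) * ((s / k) ^ 2 * (1 - ρ ^ 2))) = s / k := by
    rw [show (s / k * ρ) ^ 2 + 2 * (1 / 2) * ((s / k) ^ 2 * (1 - ρ ^ 2)) = (s / k) ^ 2 by ring,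
      Real.sqrt_sq (by positivity)]
  have hexp : s / k * ρ * x / ((s / k) ^ 2 * (1 - ρ ^ 2)) = ρ * k * x / (s * (1 - ρ ^ 2)) := by
    field_simp
  have harg : |x| * (s / k) / ((s / k) ^ 2 * (1 - ρ ^ 2)) = k * |x| / (s * (1 - ρ ^ 2)) := by
    field_simp
  have hroot : √(2 * Real.pi * ((s / k) ^ 2 * (1 - ρ ^ 2))) =
      √2 * (s / k) * √(Real.pi * (1 - ρ ^ 2)) := by
    rw [show 2 * Real.pi * ((s / k) ^ 2 * (1 - ρ ^ 2)) =
        2 * (s / k) ^ 2 * (Real.pi * (1 - ρ ^ 2)) by ring, Real.sqrt_mul (by positivity),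
      Real.sqrt_mul (by positivity), Real.sqrt_sq (by positivity)]
  have htwo : (2 : ℝ) ^ ((1 - k) / 2) = 2 * (1 / 2) ^ (k / 2) / √2 := by
    rw [one_div, Real.inv_rpow zero_le_two, ← Real.rpow_neg zero_le_two, mul_comm (2 : ℝ),
      ← Real.rpow_add_one two_ne_zero, Real.sqrt_eq_rpow, ← Real.rpow_sub two_pos]
    ring_nf
  have hν : k / 2 - 1 / 2 = (k - 1) / 2 := by ring
  have hν' : (k + 1) / 2 = (k - 1) / 2 + 1 := by ring
  rw [varianceGammaPDFReal, hv, hα, hexp, harg, hroot, hν, hν', htwo, Real.rpow_add_one hk.ne',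
    Real.rpow_add_one hs.ne', Real.div_rpow (abs_nonneg x) (by positivity),
    Real.div_rpow hs.le hk.le]
  field_simp

section StdGaussian

variable {E : Type*} [NormedAddCommGroup E] [InnerProductSpace ℝ E] [FiniteDimensional ℝ E]
  [MeasurableSpace E] [BorelSpace E]

theorem mgf_norm_sq_stdGaussian (t : ℝ) :
    mgf (fun x ↦ ‖x‖ ^ 2) (stdGaussian E) t = (√(1 - 2 * t))⁻¹ ^ Module.finrank ℝ E := by
  set b := stdOrthonormalBasis ℝ E
  have hprod (x : Fin (Module.finrank ℝ E) → ℝ) :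
      Real.exp (t * ‖∑ i, x i • b i‖ ^ 2) = ∏ i, Real.exp (t * x i ^ 2) := by
    rw [← Real.exp_sum, ← Finset.mul_sum, ← b.sum_sq_inner_right]
    simp [b.orthonormal.inner_right_fintype]
  rw [mgf, stdGaussian_eq_map_pi_orthonormalBasis b,
    integral_map (Measurable.aemeasurable (by fun_prop)) (by fun_prop)]
  simp_rw [hprod]
  rw [integral_fintype_prod_eq_pow fun x : ℝ ↦ Real.exp (t * x ^ 2), Fintype.card_fin]
  have hcoord := mgf_sq_gaussianReal 1 t
  rw [mgf, NNReal.coe_one, mul_one] at hcoord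
  rw [hcoord]

theorem map_norm_sq_stdGaussian [Nontrivial E] :
    (stdGaussian E).map (fun x ↦ ‖x‖ ^ 2) =
      gammaMeasure ((Module.finrank ℝ E : ℝ) / 2) (1 / 2) := by
  have hdim : (0 : ℝ) < (Module.finrank ℝ E : ℝ) / 2 := by
    have := Module.finrank_pos (R := ℝ) (M := E)
    positivity
  have := isProbabilityMeasure_gammaMeasure hdim one_half_pos
  have hnhds : Set.Iio (1 / 2 : ℝ) ∈ 𝓝 0 := Iio_mem_nhds one_half_pos
  have hint : 0 ∈ interior (integrableExpSet (fun x : E ↦ ‖x‖ ^ 2) (stdGaussian E)) := by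
    rw [mem_interior_iff_mem_nhds]
    filter_upwards [hnhds] with t (ht : t < 1 / 2)
    have : 0 < 1 - 2 * t := by linarith
    refine (mgf_pos_iff (X := fun x : E ↦ ‖x‖ ^ 2)).1 ?_
    rw [mgf_norm_sq_stdGaussian]
    positivity
  rw [← Measure.map_id (μ := gammaMeasure _ _)]
  refine map_eq_map_of_mgf_eventuallyEq (by fun_prop) aemeasurable_id hint ?_
  filter_upwards [hnhds] with t (ht : t < 1 / 2)
  have ht0 : 0 < 1 - 2 * t := by linarith
  rw [mgf_norm_sq_stdGaussian, mgf_id_gammaMeasure hdim one_half_pos ht,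
    ← Real.sqrt_inv, Real.sqrt_eq_rpow, ← Real.rpow_natCast, ← Real.rpow_mul (by positivity)]
  congr 1
  · field_simp
  · ring

theorem stdGaussian_map_const_add_inner (m : ℝ) (a : E) :
    (stdGaussian E).map (fun v ↦ m + inner ℝ a v) = gaussianReal m (‖a‖₊ ^ 2) := by
  have hlin : (stdGaussian E).map (innerSL ℝ a) = gaussianReal 0 (‖a‖₊ ^ 2) := by
    rw [IsGaussian.map_eq_gaussianReal, integral_strongDual_stdGaussian,
      variance_dual_stdGaussian, innerSL_apply_norm]
    congr 1
    ext
    simp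
  have hadd := gaussianReal_map_const_add (μ := 0) (v := ‖a‖₊ ^ 2) m
  rw [← hlin, Measure.map_map (by fun_prop) (by fun_prop), zero_add] at hadd
  exact hadd

theorem map_prod_stdGaussian_norm_sq_add_inner [Nontrivial E] (a b : ℝ) :
    ((stdGaussian E).prod (stdGaussian E)).map
        (fun p ↦ a * ‖p.1‖ ^ 2 + b * inner ℝ p.1 p.2) =
      varianceGamma (Module.finrank ℝ E / 2) (1 / 2) a (‖b‖₊ ^ 2) := by
  have hkernel : Measurable fun s : ℝ ↦ gaussianReal (a * s) (‖b‖₊ ^ 2 * s.toNNReal) := by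
    fun_prop
  refine Measure.ext_of_lintegral _ fun g hg ↦ ?_
  rw [varianceGamma, ← map_norm_sq_stdGaussian, lintegral_map hg (by fun_prop),
    lintegral_prod _ (by fun_prop), Measure.lintegral_bind hkernel.aemeasurable hg.aemeasurable,
    lintegral_map (by fun_prop) (by fun_prop)]
  refine lintegral_congr fun x ↦ ?_
  have hvar : ‖b‖₊ ^ 2 * (‖x‖ ^ 2).toNNReal = ‖b • x‖₊ ^ 2 := by
    ext
    simp [mul_pow, nnnorm_smul]
  rw [hvar, ← stdGaussian_map_const_add_inner, lintegral_map hg (by fun_prop)]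
  simp_rw [real_inner_smul_left]

end StdGaussian

theorem map_toLp_inl_inr_eq_prod_stdGaussian {Ω ι κ : Type*} [Fintype ι] [Fintype κ]
    [MeasurableSpace Ω] (P : Measure Ω) [IsProbabilityMeasure P] (U : ι ⊕ κ → Ω → ℝ)
    (hmeas : ∀ i, Measurable (U i)) (hUlaw : ∀ i, P.map (U i) = gaussianReal 0 1)
    (hindep : iIndepFun U P) :
    P.map (fun ω ↦ (WithLp.toLp 2 fun i ↦ U (Sum.inl i) ω, WithLp.toLp 2 fun j ↦ U (Sum.inr j) ω)) =
      (stdGaussian (EuclideanSpace ℝ ι)).prod (stdGaussian (EuclideanSpace ℝ κ)) := by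
  have hpi : P.map (fun ω i ↦ U i ω) = Measure.pi fun _ ↦ gaussianReal 0 1 := by
    rw [(iIndepFun_iff_map_fun_eq_pi_map fun i ↦ (hmeas i).aemeasurable).1 hindep]
    simp_rw [hUlaw]
  have hsplit := (measurePreserving_sumPiEquivProdPi
    (fun _ : ι ⊕ κ ↦ gaussianReal 0 1)).map_eq
  rw [← hpi, Measure.map_map (by fun_prop) (by fun_prop)] at hsplit
  rw [← map_pi_eq_stdGaussian, ← map_pi_eq_stdGaussian,
    Measure.map_prod_map _ _ (by fun_prop) (by fun_prop), ← hsplit,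
    Measure.map_map (by fun_prop) (by fun_prop)]
  rfl

theorem sum_mul_add_eq_norm_sq_add_inner {ι : Type*} [Fintype ι] (a b : ℝ)
    (x v : EuclideanSpace ℝ ι) :
    ∑ i, x i * (a * x i + b * v i) = a * ‖x‖ ^ 2 + b * inner ℝ x v := by
  simp only [EuclideanSpace.real_norm_sq_eq, PiLp.inner_apply, Finset.mul_sum,
    ← Finset.sum_add_distrib]
  refine Finset.sum_congr rfl fun i _ ↦ ?_
  simp only [RCLike.inner_apply, conj_trivial]
  ring

/-- Formula (1), the main result of Nadarajah and Pogány: with `Xᵢ, Vᵢ` (`i = 1, …, n`)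
mutually independent standard normals, `Yᵢ = ρXᵢ + √(1 − ρ²)Vᵢ` and
`Z̄ = (1/n) Σᵢ (σ_X Xᵢ)(σ_Y Yᵢ)`, the law of `Z̄` is absolutely continuous with respect to
Lebesgue measure, with density
`p(x) = n^{(n+1)/2} 2^{(1−n)/2} |x|^{(n−1)/2} / ((σ_X σ_Y)^{(n+1)/2} √(π(1 − ρ²)) Γ(n/2))
· e^{ρnx/(σ_X σ_Y(1 − ρ²))} K_{(n−1)/2}(n|x|/(σ_X σ_Y(1 − ρ²)))`. -/
theorem mean_product_correlated_normal_density
    {Ω : Type*} [MeasurableSpace Ω] (P : Measure Ω) [IsProbabilityMeasure P]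
    (ρ : ℝ) (hρ : ρ ∈ Set.Ioo (-1 : ℝ) 1)
    (σX σY : ℝ) (hσX : 0 < σX) (hσY : 0 < σY) (n : ℕ) (hn : 1 ≤ n)
    (U : (Fin n ⊕ Fin n) → Ω → ℝ) (hmeas : ∀ i, Measurable (U i))
    (hUlaw : ∀ i, P.map (U i) = gaussianReal 0 1)
    (hindep : iIndepFun U P)
    (X V : Fin n → Ω → ℝ)
    (hXdef : ∀ i, X i = U (Sum.inl i)) (hVdef : ∀ i, V i = U (Sum.inr i))
    (Y : Fin n → Ω → ℝ)
    (hY : ∀ i ω, Y i ω = ρ * X i ω + Real.sqrt (1 - ρ ^ 2) * V i ω)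
    (Zbar : Ω → ℝ)
    (hZbar : ∀ ω, Zbar ω = (1 / n) * ∑ i, (σX * X i ω) * (σY * Y i ω)) :
    P.map Zbar = volume.withDensity (fun x => ENNReal.ofReal
      ((n : ℝ) ^ (((n : ℝ) + 1) / 2) * 2 ^ ((1 - (n : ℝ)) / 2) * |x| ^ (((n : ℝ) - 1) / 2) /
          ((σX * σY) ^ (((n : ℝ) + 1) / 2) * Real.sqrt (Real.pi * (1 - ρ ^ 2)) *
            Real.Gamma ((n : ℝ) / 2)) *
        Real.exp (ρ * n * x / (σX * σY * (1 - ρ ^ 2))) *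
        besselK (((n : ℝ) - 1) / 2) (n * |x| / (σX * σY * (1 - ρ ^ 2))))) := by
  have hρ2 : 0 < 1 - ρ ^ 2 := by nlinarith [hρ.1, hρ.2]
  have hs : 0 < σX * σY := mul_pos hσX hσY
  have hn0 : (0 : ℝ) < n := by exact_mod_cast hn
  have : Nonempty (Fin n) := ⟨⟨0, hn⟩⟩
  have hv : ‖σX * σY / n * √(1 - ρ ^ 2)‖₊ ^ 2 ≠ 0 :=
    pow_ne_zero 2 (nnnorm_ne_zero_iff.2 (by positivity))
  have hZ : Zbar = (fun p : EuclideanSpace ℝ (Fin n) × EuclideanSpace ℝ (Fin n) ↦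
      σX * σY / n * ρ * ‖p.1‖ ^ 2 + σX * σY / n * √(1 - ρ ^ 2) * inner ℝ p.1 p.2) ∘
      (fun ω ↦ (WithLp.toLp 2 fun i ↦ U (Sum.inl i) ω,
        WithLp.toLp 2 fun i ↦ U (Sum.inr i) ω)) := by
    ext ω
    rw [Function.comp_apply, ← sum_mul_add_eq_norm_sq_add_inner, hZbar, Finset.mul_sum]
    refine Finset.sum_congr rfl fun i _ ↦ ?_
    rw [hY, hXdef, hVdef]
    ring
  rw [hZ, ← Measure.map_map (by fun_prop) (by fun_prop),
    map_toLp_inl_inr_eq_prod_stdGaussian P U hmeas hUlaw hindep,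
    map_prod_stdGaussian_norm_sq_add_inner, finrank_euclideanSpace_fin,
    varianceGamma_eq_withDensity (by positivity) one_half_pos hv]
  simp_rw [varianceGammaPDFReal_div_two_one_half hn0 hs hρ2]
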